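/- arXiv:2102.07366 — 2 statements merged into one kernel-verified Lean document; each statement's English description precedes it below -/
import Mathlib

section
/- Let f be L-smooth, differentiable, and μ-strongly convex (0 < μ < L) with minimizer x⋆, κ = L/μ, and γ = (√(8κ+1) + 3)/(2κ − 2). Define SC-OGM: y_{k+1} = xₖ − (1/L)∇f(xₖ), x_{k+1} = y_{k+1} + (1/(2γ+1))(y_{k+1} − yₖ) + (1/(2γ+1))(y_{k+1} − xₖ), with y₀ = x₀. Then f(yₖ) − f(x⋆) ≤ (1+γ)^{−k+1} · ((μ+2L)/2)‖x₀ − x⋆‖² for all k ≥ 1. -/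
open RealInnerProductSpace

/-!
The proof tracks an auxiliary point `w k` for which `x (k + 1)` is a convex combination of
`y (k + 1)` and `w k`, while `w (k + 1)` is a convex combination of `w k` and `x (k + 1)` shifted
along the gradient at `x (k + 1)`. Adding cocoercivity of the gradient between `x k` and `x (k + 1)`
to `γ` times the strong convexity bound between `x (k + 1)` and `x⋆` shows that
`f (x k) - f x⋆ - ‖∇f (x k)‖² / (2 L) + (μ / 2) ‖w k - x⋆‖²` shrinks by the factor `1 + γ` at each
step; the scalar `γ` is the positive root of `L γ² = μ (γ + 1) (γ + 2)`, which is exactly what makes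
the `‖∇f (x (k + 1))‖²` terms cancel. One gradient step from `x k` to `y (k + 1)` turns this into a
bound on `f (y (k + 1)) - f x⋆`.
-/

section NormSq

variable {E : Type*} [SeminormedAddCommGroup E] [InnerProductSpace ℝ E]

lemma norm_sub_smul_sq (c : ℝ) (v w : E) :
    ‖v - c • w‖ ^ 2 = ‖v‖ ^ 2 - 2 * c * ⟪w, v⟫ + c ^ 2 * ‖w‖ ^ 2 := by
  rw [norm_sub_sq_real, real_inner_smul_right, norm_smul, mul_pow, Real.norm_eq_abs, sq_abs,
    real_inner_comm]
  ring

lemma norm_add_smul_sq_le {c : ℝ} (hc : 0 ≤ c) (v w : E) :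
    ‖v + c • w‖ ^ 2 ≤ (1 + c) * (‖v‖ ^ 2 + c * ‖w‖ ^ 2) := by
  have hexpand := norm_sub_smul_sq (-c) v w
  have hgap : 0 ≤ c * ‖v - w‖ ^ 2 := by positivity
  rw [norm_sub_sq_real, real_inner_comm] at hgap
  rw [neg_smul, sub_neg_eq_add] at hexpand
  linarith

end NormSq

section Gradient

variable {E : Type*} [NormedAddCommGroup E] [InnerProductSpace ℝ E] [CompleteSpace E]
  {f : E → ℝ} {f' : E → E} {g x y : E} {s : Set E} {L μ : ℝ}

lemma hasDerivAt_comp_lineMap_of_hasGradientAt {t : ℝ}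
    (hf : HasGradientAt f g (AffineMap.lineMap x y t)) :
    HasDerivAt (fun r : ℝ => f (AffineMap.lineMap x y r)) ⟪g, y - x⟫ t :=
  hf.hasFDerivAt.comp_hasDerivAt t AffineMap.hasDerivAt_lineMap

lemma eq_zero_of_hasGradientAt_of_isLocalMin (hf : HasGradientAt f g x) (hx : IsLocalMin f x) :
    g = 0 := by
  simpa using hx.hasFDerivAt_eq_zero hf.hasFDerivAt

lemma hasGradientAt_half_mul_norm_sq (c : ℝ) (x : E) :
    HasGradientAt (fun z => c / 2 * ‖z‖ ^ 2) (c • x) x := by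
  rw [hasGradientAt_iff_hasFDerivAt]
  refine ((hasStrictFDerivAt_norm_sq x).hasFDerivAt.const_mul (c / 2)).congr_fderiv ?_
  ext v
  simp only [smul_apply, coe_innerSL_apply, nsmul_eq_mul, Nat.cast_ofNat, smul_eq_mul, map_smul,
    InnerProductSpace.toDual_apply_apply]
  ring

lemma hasGradientAt_sub_inner (hf : HasGradientAt f g x) (a : E) :
    HasGradientAt (fun z => f z - ⟪a, z⟫) (g - a) x := by
  rw [hasGradientAt_iff_hasFDerivAt, map_sub]
  exact hf.hasFDerivAt.sub (InnerProductSpace.toDual ℝ E a).hasFDerivAt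

lemma add_inner_le_of_convexOn (hf : ConvexOn ℝ s f) (hx : x ∈ s) (hy : y ∈ s)
    (hg : HasGradientAt f g x) : f x + ⟪g, y - x⟫ ≤ f y := by
  have hline : ConvexOn ℝ (AffineMap.lineMap x y ⁻¹' s) fun r : ℝ => f (AffineMap.lineMap x y r) :=
    hf.comp_affineMap _
  have hslope := hline.le_slope_of_hasDerivAt (x := 0) (y := 1) (by simpa using hx)
    (by simpa using hy) one_pos (hasDerivAt_comp_lineMap_of_hasGradientAt (by simpa using hg))
  simp only [slope_def_field, AffineMap.lineMap_apply_zero, AffineMap.lineMap_apply_one, sub_zero,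
    div_one] at hslope
  linarith

lemma add_inner_add_sq_le_of_strongConvexOn (hf : StrongConvexOn s μ f) (hx : x ∈ s) (hy : y ∈ s)
    (hg : HasGradientAt f g x) : f x + ⟪g, y - x⟫ + μ / 2 * ‖y - x‖ ^ 2 ≤ f y := by
  have hgrad : HasGradientAt (fun z => f z - μ / 2 * ‖z‖ ^ 2) (g - μ • x) x := by
    rw [hasGradientAt_iff_hasFDerivAt, map_sub]
    exact hg.hasFDerivAt.sub (hasGradientAt_half_mul_norm_sq μ x).hasFDerivAt
  have htangent := add_inner_le_of_convexOn (strongConvexOn_iff_convex.1 hf) hx hy hgrad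
  have hsq : ‖y‖ ^ 2 = ‖x‖ ^ 2 + 2 * ⟪x, y - x⟫ + ‖y - x‖ ^ 2 := by
    rw [← norm_add_sq_real, add_sub_cancel]
  rw [hsq, inner_sub_left, real_inner_smul_left] at htangent
  linarith

lemma le_add_inner_add_sq_of_norm_gradient_sub_le (hf : ∀ z, HasGradientAt f (f' z) z)
    (hL : ∀ z, ‖f' z - f' x‖ ≤ L * ‖z - x‖) (y : E) :
    f y ≤ f x + ⟪f' x, y - x⟫ + L / 2 * ‖y - x‖ ^ 2 := by
  have hderiv (t : ℝ) := hasDerivAt_comp_lineMap_of_hasGradientAt (hf (AffineMap.lineMap x y t))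
  have hderiv_model (t : ℝ) : HasDerivAt
      (fun r : ℝ => f x + r * ⟪f' x, y - x⟫ + r ^ 2 * (L / 2 * ‖y - x‖ ^ 2))
      (⟪f' x, y - x⟫ + t * (L * ‖y - x‖ ^ 2)) t := by
    refine ((((hasDerivAt_id' t).mul_const ⟪f' x, y - x⟫).const_add (f x)).add
      ((hasDerivAt_pow 2 t).mul_const (L / 2 * ‖y - x‖ ^ 2))).congr_deriv ?_
    ring
  have hderiv_le (t : ℝ) (ht : 0 ≤ t) : ⟪f' (AffineMap.lineMap x y t), y - x⟫
      ≤ ⟪f' x, y - x⟫ + t * (L * ‖y - x‖ ^ 2) := by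
    rw [← sub_le_iff_le_add', ← inner_sub_left]
    calc ⟪f' (AffineMap.lineMap x y t) - f' x, y - x⟫
        ≤ ‖f' (AffineMap.lineMap x y t) - f' x‖ * ‖y - x‖ := real_inner_le_norm _ _
      _ ≤ L * ‖AffineMap.lineMap x y t - x‖ * ‖y - x‖ := by gcongr; exact hL _
      _ = t * (L * ‖y - x‖ ^ 2) := by
        rw [← vsub_eq_sub (AffineMap.lineMap x y t), AffineMap.lineMap_vsub_left, vsub_eq_sub,
          norm_smul, Real.norm_of_nonneg ht]
        ring
  simpa using image_le_of_deriv_right_le_deriv_boundary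
    (fun t _ => (hderiv t).continuousAt.continuousWithinAt)
    (fun t _ => (hderiv t).hasDerivWithinAt) (by simp)
    (fun t _ => (hderiv_model t).continuousAt.continuousWithinAt)
    (fun t _ => (hderiv_model t).hasDerivWithinAt) (fun t ht => hderiv_le t ht.1)
    (Set.right_mem_Icc.2 (zero_le_one' ℝ))

lemma apply_sub_smul_gradient_le (hL₀ : 0 < L) (hf : ∀ z, HasGradientAt f (f' z) z)
    (hL : ∀ z, ‖f' z - f' x‖ ≤ L * ‖z - x‖) :
    f (x - (1 / L) • f' x) ≤ f x - 1 / (2 * L) * ‖f' x‖ ^ 2 := by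
  have hdescent := le_add_inner_add_sq_of_norm_gradient_sub_le hf hL (x - (1 / L) • f' x)
  rw [sub_sub_cancel_left, inner_neg_right, real_inner_smul_right, real_inner_self_eq_norm_sq,
    norm_neg, norm_smul, mul_pow, Real.norm_eq_abs, sq_abs] at hdescent
  convert hdescent using 1
  field_simp
  ring

lemma add_inner_add_norm_gradient_sub_sq_le (hL₀ : 0 < L) (hf : ∀ z, HasGradientAt f (f' z) z)
    (hconv : ConvexOn ℝ Set.univ f) (hL : ∀ z, ‖f' z - f' x‖ ≤ L * ‖z - x‖) :
    f y + ⟪f' y, x - y⟫ + 1 / (2 * L) * ‖f' x - f' y‖ ^ 2 ≤ f x := by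
  -- Tilting `f` by its gradient at `y` gives a function minimized at `y`.
  have hstep := apply_sub_smul_gradient_le (x := x) hL₀
    (fun z => hasGradientAt_sub_inner (hf z) (f' y)) (by simpa using hL)
  have htangent := add_inner_le_of_convexOn hconv (Set.mem_univ y)
    (Set.mem_univ (x - (1 / L) • (f' x - f' y))) (hf y)
  rw [inner_sub_right] at htangent ⊢
  linarith

lemma add_inner_gradient_step_le (hL₀ : 0 < L) (hf : ∀ z, HasGradientAt f (f' z) z)
    (hconv : ConvexOn ℝ Set.univ f) (hL : ∀ z, ‖f' z - f' x‖ ≤ L * ‖z - x‖) :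
    f y - 1 / (2 * L) * ‖f' y‖ ^ 2 + ⟪f' y, x - (1 / L) • f' x - y⟫ + 1 / L * ‖f' y‖ ^ 2
      ≤ f x - 1 / (2 * L) * ‖f' x‖ ^ 2 := by
  have hcoco := add_inner_add_norm_gradient_sub_sq_le (y := y) hL₀ hf hconv hL
  rw [norm_sub_sq_real, real_inner_comm (f' y)] at hcoco
  rw [sub_right_comm x, inner_sub_right, real_inner_smul_right]
  have hhalf : 1 / L = 2 * (1 / (2 * L)) := by field_simp
  rw [hhalf]
  linarith

end Gradient

section Momentum

/-- The parameter `γ` of SC-OGM as a function of the condition number `κ = L / μ`: for `κ > 1` it is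
the positive root of `κ γ² = (γ + 1) (γ + 2)`; at `κ = 1` the division makes it `0`. -/
noncomputable def scogmMomentum (κ : ℝ) : ℝ :=
  (Real.sqrt (8 * κ + 1) + 3) / (2 * κ - 2)

variable {κ : ℝ}

lemma scogmMomentum_pos (hκ : 1 < κ) : 0 < scogmMomentum κ :=
  div_pos (by positivity) (by linarith)

lemma mul_scogmMomentum_sq (hκ : 1 < κ) :
    κ * scogmMomentum κ ^ 2 = (scogmMomentum κ + 1) * (scogmMomentum κ + 2) := by
  have hsq : Real.sqrt (8 * κ + 1) ^ 2 = 8 * κ + 1 := Real.sq_sqrt (by linarith)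
  have hden : 2 * κ - 2 ≠ 0 := by linarith
  rw [scogmMomentum, div_pow, mul_div_assoc', div_add' _ _ _ hden, div_add' _ _ _ hden,
    div_mul_div_comm, ← sq]
  congr 1
  linear_combination (κ - 1) * hsq

end Momentum

/-- The iterates `x`, `y` of SC-OGM with gradient oracle `f'`, smoothness constant `L` and momentum
parameter `γ`: `y` is the primary sequence of gradient steps, `x` the extrapolated sequence. -/
structure IsSCOGM {E : Type*} [AddCommGroup E] [Module ℝ E] (f' : E → E) (L γ : ℝ)
    (x y : ℕ → E) : Prop where
  y_zero : y 0 = x 0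
  y_succ (k : ℕ) : y (k + 1) = x k - (1 / L) • f' (x k)
  x_succ (k : ℕ) : x (k + 1) = y (k + 1) + (1 / (2 * γ + 1)) • (y (k + 1) - y k)
    + (1 / (2 * γ + 1)) • (y (k + 1) - x k)

/-- The auxiliary sequence of SC-OGM, chosen so that `x (k + 1)` is the convex combination of
`y (k + 1)` and `scogmAux γ x y k` with weights `(1 + γ) / (1 + 2γ)` and `γ / (1 + 2γ)`. -/
noncomputable def scogmAux {E : Type*} [AddCommGroup E] [Module ℝ E] (γ : ℝ) (x y : ℕ → E)
    (k : ℕ) : E :=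
  (1 / γ) • ((γ + 2) • y (k + 1) - y k - x k)

/-- The Lyapunov function of SC-OGM relative to a reference point `z`, eventually the minimizer. -/
noncomputable def scogmPotential {E : Type*} [SeminormedAddCommGroup E] [NormedSpace ℝ E]
    (f : E → ℝ) (f' : E → E) (L μ γ : ℝ) (x y : ℕ → E) (z : E) (k : ℕ) : ℝ :=
  f (x k) - f z - 1 / (2 * L) * ‖f' (x k)‖ ^ 2 + μ / 2 * ‖scogmAux γ x y k - z‖ ^ 2

namespace IsSCOGM

section Recursion

variable {E : Type*} [AddCommGroup E] [Module ℝ E] {f' : E → E} {L μ γ : ℝ} {x y : ℕ → E}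

lemma smul_x_succ (h : IsSCOGM f' L γ x y) (hγ : 0 < γ) (k : ℕ) :
    (1 + 2 * γ) • x (k + 1) = (1 + γ) • y (k + 1) + γ • scogmAux γ x y k := by
  rw [scogmAux, h.x_succ]
  match_scalars <;> field_simp <;> ring

lemma smul_aux_succ (h : IsSCOGM f' L γ x y) (hL : 0 < L) (hμ : 0 < μ) (hγ : 0 < γ)
    (hroot : L * γ ^ 2 = μ * ((γ + 1) * (γ + 2))) (k : ℕ) :
    (1 + γ) • scogmAux γ x y (k + 1)
      = scogmAux γ x y k + γ • x (k + 1) - (γ / μ) • f' (x (k + 1)) := by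
  have hcoeff : γ / μ = (γ + 2) * (1 + γ) / (L * γ) := by
    field_simp
    linarith
  rw [hcoeff, scogmAux, scogmAux, h.y_succ (k + 1)]
  generalize f' (x (k + 1)) = g
  rw [h.x_succ]
  match_scalars <;> field_simp <;> ring

lemma aux_zero (h : IsSCOGM f' L γ x y) (hγ : 0 < γ) :
    scogmAux γ x y 0 = x 0 - ((γ + 2) / (L * γ)) • f' (x 0) := by
  rw [scogmAux, h.y_succ, h.y_zero]
  match_scalars <;> field_simp
  ring

end Recursion

section DistanceBound

variable {E : Type*} [SeminormedAddCommGroup E] [InnerProductSpace ℝ E] {f' : E → E}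
  {L μ γ : ℝ} {x y : ℕ → E}

lemma norm_aux_succ_sub_sq_le (h : IsSCOGM f' L γ x y) (hL : 0 < L) (hμ : 0 < μ) (hγ : 0 < γ)
    (hroot : L * γ ^ 2 = μ * ((γ + 1) * (γ + 2))) (z : E) (k : ℕ) :
    (1 + γ) * (μ / 2 * ‖scogmAux γ x y (k + 1) - z‖ ^ 2)
      ≤ μ / 2 * ‖scogmAux γ x y k - z‖ ^ 2
        + γ * (μ / 2 * ‖x (k + 1) - z‖ ^ 2 - ⟪f' (x (k + 1)), x (k + 1) - z⟫)
        + ⟪f' (x (k + 1)), y (k + 1) - x (k + 1)⟫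
        + (γ + 2) * (1 / (2 * L) * ‖f' (x (k + 1))‖ ^ 2) := by
  have hw : (1 + γ) ^ 2 * ‖scogmAux γ x y (k + 1) - z‖ ^ 2
      = ‖scogmAux γ x y k - z + γ • (x (k + 1) - z) - (γ / μ) • f' (x (k + 1))‖ ^ 2 := by
    have hsmul : (1 + γ) • (scogmAux γ x y (k + 1) - z)
        = scogmAux γ x y k - z + γ • (x (k + 1) - z) - (γ / μ) • f' (x (k + 1)) := by
      rw [smul_sub, h.smul_aux_succ hL hμ hγ hroot]
      module
    rw [← hsmul, norm_smul, mul_pow, Real.norm_eq_abs, sq_abs]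
  have hcombination : γ • (scogmAux γ x y k - z + γ • (x (k + 1) - z))
      = (1 + γ) • (γ • (x (k + 1) - z) - (y (k + 1) - x (k + 1))) := by
    linear_combination (norm := module) -h.smul_x_succ hγ k
  have hinner := congrArg (fun v => ⟪f' (x (k + 1)), v⟫) hcombination
  simp only [real_inner_smul_right, inner_sub_right _ (γ • _)] at hinner
  have hconvex := norm_add_smul_sq_le hγ.le (scogmAux γ x y k - z) (x (k + 1) - z)
  have hcoeff : μ / 2 * (γ / μ) ^ 2 = (1 + γ) * ((γ + 2) * (1 / (2 * L))) := by
    field_simp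
    linarith
  have hcancel : μ * (γ / μ) = γ := mul_div_cancel₀ γ hμ.ne'
  rw [norm_sub_smul_sq] at hw
  refine le_of_mul_le_mul_left ?_ (by positivity : 0 < 1 + γ)
  linear_combination μ / 2 * hw + μ / 2 * hconvex + ‖f' (x (k + 1))‖ ^ 2 * hcoeff - hinner
    - ⟪f' (x (k + 1)), scogmAux γ x y k - z + γ • (x (k + 1) - z)⟫ * hcancel

end DistanceBound

section Rate

variable {E : Type*} [NormedAddCommGroup E] [InnerProductSpace ℝ E] [CompleteSpace E]
  {f : E → ℝ} {f' : E → E} {L μ γ : ℝ} {x y : ℕ → E} {z : E}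

lemma potential_succ_le (h : IsSCOGM f' L γ x y) (hμ : 0 < μ) (hL₀ : 0 < L) (hγ : 0 < γ)
    (hroot : L * γ ^ 2 = μ * ((γ + 1) * (γ + 2))) (hf : ∀ z, HasGradientAt f (f' z) z)
    (hconv : StrongConvexOn Set.univ μ f) (hL : ∀ u v, ‖f' u - f' v‖ ≤ L * ‖u - v‖) (z : E)
    (k : ℕ) :
    (1 + γ) * scogmPotential f f' L μ γ x y z (k + 1) ≤ scogmPotential f f' L μ γ x y z k := by
  have hinterp := add_inner_gradient_step_le (x := x k) (y := x (k + 1)) hL₀ hf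
    (hconv.strictConvexOn hμ).convexOn (fun u => hL u _)
  have hstrong := add_inner_add_sq_le_of_strongConvexOn hconv (Set.mem_univ (x (k + 1)))
    (Set.mem_univ z) (hf _)
  have haux := h.norm_aux_succ_sub_sq_le hL₀ hμ hγ hroot z k
  rw [← h.y_succ] at hinterp
  rw [← neg_sub, inner_neg_right, norm_neg] at hstrong
  have hhalf : 1 / L = 2 * (1 / (2 * L)) := by field_simp
  rw [hhalf] at hinterp
  simp only [scogmPotential]
  linear_combination hinterp + γ * hstrong + haux

lemma potential_zero_le (h : IsSCOGM f' L γ x y) (hμ : 0 < μ) (hL₀ : 0 < L) (hγ : 0 < γ)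
    (hroot : L * γ ^ 2 = μ * ((γ + 1) * (γ + 2))) (hf : ∀ z, HasGradientAt f (f' z) z)
    (hconv : ConvexOn ℝ Set.univ f) (hL : ∀ u v, ‖f' u - f' v‖ ≤ L * ‖u - v‖)
    (hz : f' z = 0) :
    scogmPotential f f' L μ γ x y z 0 ≤ (μ + 2 * L) / 2 * ‖x 0 - z‖ ^ 2 := by
  have hsub_le := le_add_inner_add_sq_of_norm_gradient_sub_le hf (fun u => hL u z) (x 0)
  have hle_sub := add_inner_le_of_convexOn hconv (Set.mem_univ z) (Set.mem_univ (x 0)) (hf z)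
  have htangent := add_inner_le_of_convexOn hconv (Set.mem_univ (x 0)) (Set.mem_univ z) (hf (x 0))
  rw [hz, inner_zero_left] at hsub_le hle_sub
  rw [← neg_sub, inner_neg_right] at htangent
  have hgrad : 1 / (2 * L) * ‖f' (x 0)‖ ^ 2 ≤ L / 2 * ‖x 0 - z‖ ^ 2 := by
    have hnorm : ‖f' (x 0)‖ ≤ L * ‖x 0 - z‖ := by simpa [hz] using hL (x 0) z
    calc 1 / (2 * L) * ‖f' (x 0)‖ ^ 2 ≤ 1 / (2 * L) * (L * ‖x 0 - z‖) ^ 2 := by gcongr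
      _ = L / 2 * ‖x 0 - z‖ ^ 2 := by field_simp
  have hcoeff : μ / 2 * ((γ + 2) / (L * γ)) ^ 2 ≤ 2 * (1 / (2 * L)) := by
    calc μ / 2 * ((γ + 2) / (L * γ)) ^ 2 = (γ + 2) / (γ + 1) * (1 / (2 * L)) := by
          field_simp
          linarith
      _ ≤ 2 * (1 / (2 * L)) := by
          gcongr
          rw [div_le_iff₀ (by positivity)]
          linarith
  have haux : μ / 2 * ‖scogmAux γ x y 0 - z‖ ^ 2
      ≤ μ / 2 * ‖x 0 - z‖ ^ 2 + 2 * (1 / (2 * L)) * ‖f' (x 0)‖ ^ 2 := by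
    have hcross : 0 ≤ μ * ((γ + 2) / (L * γ)) * ⟪f' (x 0), x 0 - z⟫ :=
      mul_nonneg (by positivity) (by linarith)
    rw [h.aux_zero hγ, sub_right_comm, norm_sub_smul_sq]
    linear_combination hcross + ‖f' (x 0)‖ ^ 2 * hcoeff
  rw [scogmPotential]
  linarith

lemma apply_y_succ_sub_le_potential (h : IsSCOGM f' L γ x y) (hμ : 0 ≤ μ) (hL₀ : 0 < L)
    (hf : ∀ z, HasGradientAt f (f' z) z) (hL : ∀ u v, ‖f' u - f' v‖ ≤ L * ‖u - v‖) (k : ℕ) :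
    f (y (k + 1)) - f z ≤ scogmPotential f f' L μ γ x y z k := by
  have hstep := apply_sub_smul_gradient_le (x := x k) hL₀ hf (fun u => hL u _)
  have hnonneg : 0 ≤ μ / 2 * ‖scogmAux γ x y k - z‖ ^ 2 := by positivity
  rw [← h.y_succ] at hstep
  rw [scogmPotential]
  linarith

lemma potential_le_pow_mul (h : IsSCOGM f' L γ x y) (hμ : 0 < μ) (hL₀ : 0 < L) (hγ : 0 < γ)
    (hroot : L * γ ^ 2 = μ * ((γ + 1) * (γ + 2))) (hf : ∀ z, HasGradientAt f (f' z) z)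
    (hconv : StrongConvexOn Set.univ μ f) (hL : ∀ u v, ‖f' u - f' v‖ ≤ L * ‖u - v‖) (z : E)
    (k : ℕ) :
    scogmPotential f f' L μ γ x y z k ≤ (1 + γ)⁻¹ ^ k * scogmPotential f f' L μ γ x y z 0 := by
  refine le_geom (by positivity) k fun m _ => ?_
  rw [le_inv_mul_iff₀ (by positivity)]
  exact h.potential_succ_le hμ hL₀ hγ hroot hf hconv hL z m

lemma apply_y_succ_sub_le (h : IsSCOGM f' L γ x y) (hμ : 0 < μ) (hL₀ : 0 < L) (hγ : 0 < γ)
    (hroot : L * γ ^ 2 = μ * ((γ + 1) * (γ + 2))) (hf : ∀ z, HasGradientAt f (f' z) z)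
    (hconv : StrongConvexOn Set.univ μ f) (hL : ∀ u v, ‖f' u - f' v‖ ≤ L * ‖u - v‖)
    (hz : f' z = 0) (k : ℕ) :
    f (y (k + 1)) - f z ≤ (1 + γ)⁻¹ ^ k * ((μ + 2 * L) / 2 * ‖x 0 - z‖ ^ 2) :=
  calc f (y (k + 1)) - f z
    _ ≤ scogmPotential f f' L μ γ x y z k := h.apply_y_succ_sub_le_potential hμ.le hL₀ hf hL k
    _ ≤ (1 + γ)⁻¹ ^ k * scogmPotential f f' L μ γ x y z 0 :=
      h.potential_le_pow_mul hμ hL₀ hγ hroot hf hconv hL z k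
    _ ≤ (1 + γ)⁻¹ ^ k * ((μ + 2 * L) / 2 * ‖x 0 - z‖ ^ 2) := by
      gcongr
      exact h.potential_zero_le hμ hL₀ hγ hroot hf (hconv.strictConvexOn hμ).convexOn hL hz

end Rate

end IsSCOGM

theorem sc_ogm_primary_rate_general {E : Type*} [NormedAddCommGroup E] [InnerProductSpace ℝ E]
    [CompleteSpace E] {f : E → ℝ} {f' : E → E} {L μ : ℝ} (hμ : 0 < μ) (hμL : μ < L)
    (hf : ∀ x, HasGradientAt f (f' x) x) (hconv : StrongConvexOn Set.univ μ f)
    (hL : ∀ x y, ‖f' x - f' y‖ ≤ L * ‖x - y‖) {xstar : E} (hmin : ∀ y, f xstar ≤ f y)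
    {κ γ : ℝ} (hκ : κ = L / μ) (hγ : γ = scogmMomentum κ) {x y : ℕ → E}
    (h : IsSCOGM f' L γ x y) (k : ℕ) :
    f (y k) - f xstar
      ≤ (1 + γ) ^ (-(k : ℝ) + 1) * ((μ + 2 * L) / 2) * ‖x 0 - xstar‖ ^ 2 := by
  have hL₀ : 0 < L := hμ.trans hμL
  have hκ₁ : 1 < κ := by rwa [hκ, one_lt_div hμ]
  have hγ₀ : 0 < γ := hγ ▸ scogmMomentum_pos hκ₁
  have hroot : L * γ ^ 2 = μ * ((γ + 1) * (γ + 2)) := by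
    rw [hγ, ← mul_scogmMomentum_sq hκ₁, hκ, ← mul_assoc, mul_div_cancel₀ L hμ.ne']
  have hstar : f' xstar = 0 :=
    eq_zero_of_hasGradientAt_of_isLocalMin (hf xstar) (Filter.Eventually.of_forall hmin)
  rw [mul_assoc]
  cases k with
  | zero =>
    have hdescent := le_add_inner_add_sq_of_norm_gradient_sub_le hf (fun u => hL u xstar) (x 0)
    rw [hstar, inner_zero_left] at hdescent
    have hnonneg : 0 ≤ (μ + L) / 2 * ‖x 0 - xstar‖ ^ 2 := by positivity
    have hγnonneg : 0 ≤ γ * ((μ + 2 * L) / 2 * ‖x 0 - xstar‖ ^ 2) := by positivity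
    rw [h.y_zero, Nat.cast_zero, neg_zero, zero_add, Real.rpow_one]
    linarith
  | succ m =>
    have hexponent : (1 + γ) ^ (-((m + 1 : ℕ) : ℝ) + 1) = (1 + γ)⁻¹ ^ m := by
      rw [Nat.cast_succ, neg_add_rev, neg_add_cancel_comm, Real.rpow_neg (by positivity),
        Real.rpow_natCast, inv_pow]
    rw [hexponent]
    exact h.apply_y_succ_sub_le hμ hL₀ hγ₀ hroot hf hconv hL hstar m

/-- Convergence rate of SC-OGM's primary sequence:
`f(yₖ) − f⋆ ≤ (1+γ)^{−k+1} ((μ+2L)/2) ‖x₀ − x⋆‖²` for `k ≥ 1`. -/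
theorem sc_ogm_primary_rate (n : ℕ)
    (f : EuclideanSpace ℝ (Fin n) → ℝ)
    (f' : EuclideanSpace ℝ (Fin n) → EuclideanSpace ℝ (Fin n))
    (L μ : ℝ) (hμ : 0 < μ) (hμL : μ < L)
    (hdiff : ∀ x, HasGradientAt f (f' x) x)
    (hsconv : ConvexOn ℝ Set.univ (fun x => f x - (μ / 2) * ‖x‖ ^ 2))
    (hsmooth : ∀ x y, ‖f' x - f' y‖ ≤ L * ‖x - y‖)
    (xstar : EuclideanSpace ℝ (Fin n)) (hmin : ∀ y, f xstar ≤ f y)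
    (κ γ : ℝ) (hκ : κ = L / μ)
    (hγ : γ = (Real.sqrt (8 * κ + 1) + 3) / (2 * κ - 2))
    (x y : ℕ → EuclideanSpace ℝ (Fin n))
    (hx0 : y 0 = x 0)
    (hy : ∀ k, y (k + 1) = x k - (1 / L) • f' (x k))
    (hx : ∀ k, x (k + 1) = y (k + 1) + (1 / (2 * γ + 1)) • (y (k + 1) - y k)
      + (1 / (2 * γ + 1)) • (y (k + 1) - x k)) :
    ∀ k : ℕ, 1 ≤ k →
      f (y k) - f xstar
        ≤ (1 + γ) ^ (-(k : ℝ) + 1) * ((μ + 2 * L) / 2) * ‖x 0 - xstar‖ ^ 2 := by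
  exact fun k _ => sc_ogm_primary_rate_general hμ hμL hdiff (strongConvexOn_iff_convex.2 hsconv)
    hsmooth hmin hκ hγ ⟨hx0, hy, hx⟩ k
end

section
/- Consider the linear coupling method with quadratic norm Q: y_{k+1} = xₖ − L⁻¹Q⁻¹∇f(xₖ), z_{k+1} = argmin_y {V_{zₖ}(y) + ⟨α_{k+1}∇f(xₖ), y − xₖ⟩}, x_{k+1} = (1−τ_{k+1})y_{k+1} + τ_{k+1}z_{k+1}, x₀ = z₀, with α₁ = 2/L, 0 ≤ α_{k+1}²L − 2α_{k+1} ≤ αₖ²L, and τₖ = 2/(α_{k+1}L) ∈ (0,1]. Then f(yₖ) − f(x⋆) ≤ 2V_{x₀}(x⋆)/(Lαₖ²) for all k ≥ 1. -/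
open RealInnerProductSpace

/-!
Write `‖u‖*² = ⟪u, Q⁻¹ u⟫` and `G x = f x - ‖∇ f x‖*² / (2 L)`. A gradient step from `p` to `y`
satisfies `f y ≤ G p`, and cocoercivity of the gradient reads
`G x + ‖∇ f x‖*² / L + ⟪∇ f x, y - x⟫ ≤ G p`.
It bounds both terms of the coupling: `p = xₖ` gives the comparison with the previous iterate, and
`p = y = x⋆` the comparison with the minimizer. Adding the mirror descent inequality for `z` shows
that `αₖ² L / 2 * (G xₖ₋₁ - f x⋆) + V zₖ x⋆` does not increase. Working with `G` instead of `f` is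
what gains the factor two over the accelerated gradient method.
-/

open Set
open scoped Gradient

lemma sub_eq_smul_sub_of_eq_add {R M : Type*} [CommRing R] [AddCommGroup M] [Module R M]
    {c t : R} {x y z : M} (hct : c * t = 1) (hx : x = (1 - t) • y + t • z) :
    x - z = (c - 1) • (y - x) := by
  rw [hx]
  match_scalars
  · linear_combination -hct
  · linear_combination hct

variable {E : Type*} [NormedAddCommGroup E] [InnerProductSpace ℝ E]

section QuadraticNorm

variable {Q : E ≃L[ℝ] E}

lemma inner_symm_apply_eq (hQ : (Q : E →L[ℝ] E).IsSymmetric) (u v : E) :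
    ⟪Q.symm u, v⟫ = ⟪u, Q.symm v⟫ := by
  simpa using (hQ (Q.symm u) (Q.symm v)).symm

lemma inner_symm_apply_self_nonneg (hQ : (Q : E →L[ℝ] E).IsPositive) (u : E) :
    0 ≤ ⟪u, Q.symm u⟫ := by
  simpa using hQ.inner_nonneg_left (Q.symm u)

lemma inner_sub_symm_apply_sub (hQ : (Q : E →L[ℝ] E).IsSymmetric) (u v : E) :
    ⟪u - v, Q.symm (u - v)⟫ = ⟪u, Q.symm u⟫ - 2 * ⟪v, Q.symm u⟫ + ⟪v, Q.symm v⟫ := by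
  have hcomm : ⟪u, Q.symm v⟫ = ⟪v, Q.symm u⟫ := by
    rw [← inner_symm_apply_eq hQ, real_inner_comm]
  simp only [map_sub, inner_sub_left, inner_sub_right, hcomm]
  ring

lemma inner_le_sqrt_mul_sqrt (hQ : (Q : E →L[ℝ] E).IsPositive) (u d : E) :
    ⟪u, d⟫ ≤ √⟪u, Q.symm u⟫ * √⟪d, Q d⟫ := by
  let B : LinearMap.BilinForm ℝ E := innerₗ E ∘ₗ (Q : E →ₗ[ℝ] E)
  have hB : LinearMap.IsSymm B := ⟨fun a b => (hQ.isSymmetric a b).trans (real_inner_comm _ _)⟩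
  have hsq : ⟪u, d⟫ ^ 2 ≤ ⟪u, Q.symm u⟫ * ⟪d, Q d⟫ := by
    simpa [B, real_inner_comm] using B.apply_sq_le_of_symm hQ.inner_nonneg_left hB (Q.symm u) d
  rw [← Real.sqrt_mul (inner_symm_apply_self_nonneg hQ u)]
  exact Real.le_sqrt_of_sq_le hsq

lemma inner_le_half_add_half (hQ : (Q : E →L[ℝ] E).IsPositive) (u d : E) :
    ⟪u, d⟫ ≤ 1 / 2 * ⟪u, Q.symm u⟫ + 1 / 2 * ⟪d, Q d⟫ := by
  have hd : 0 ≤ ⟪d, Q d⟫ := hQ.inner_nonneg_right d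
  have hamgm := two_mul_le_add_sq √⟪u, Q.symm u⟫ √⟪d, Q d⟫
  rw [Real.sq_sqrt (inner_symm_apply_self_nonneg hQ u), Real.sq_sqrt hd] at hamgm
  linarith [inner_le_sqrt_mul_sqrt hQ u d]

end QuadraticNorm

variable [CompleteSpace E]

section Gradient

variable {f : E → ℝ}

lemma hasDerivAt_comp_add_smul {x d g : E} {t : ℝ} (hf : HasGradientAt f g (x + t • d)) :
    HasDerivAt (fun s : ℝ => f (x + s • d)) ⟪g, d⟫ t := by
  have hline : HasDerivAt (fun s : ℝ => x + s • d) d t := by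
    simpa using ((hasDerivAt_id t).smul_const d).const_add x
  simpa [Function.comp_def] using hf.hasFDerivAt.comp_hasDerivAt t hline

lemma add_inner_le_of_convexOn_s16 {s : Set E} (hconv : ConvexOn ℝ s f) {a b g : E} (ha : a ∈ s)
    (hb : b ∈ s) (hf : HasGradientAt f g a) : f a + ⟪g, b - a⟫ ≤ f b := by
  have hline : HasDerivAt (fun t : ℝ => f (a + t • (b - a))) ⟪g, b - a⟫ 0 :=
    hasDerivAt_comp_add_smul (by simpa using hf)
  have hconv_line : ConvexOn ℝ (AffineMap.lineMap (k := ℝ) a b ⁻¹' s)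
      fun t : ℝ => f (a + t • (b - a)) := by
    simpa [Function.comp_def, AffineMap.lineMap_apply, add_comm]
      using hconv.comp_affineMap (AffineMap.lineMap (k := ℝ) a b)
  have hslope := hconv_line.le_slope_of_hasDerivAt (x := 0) (y := 1)
    (by simpa using ha) (by simpa using hb) one_pos hline
  simp only [slope_def_field, one_smul, zero_smul, add_zero, sub_zero, div_one,
    add_sub_cancel] at hslope
  linarith

lemma eq_zero_of_isLocalMin_of_hasGradientAt {a g : E} (hmin : IsLocalMin f a)
    (hf : HasGradientAt f g a) : g = 0 := by
  simpa using hmin.hasFDerivAt_eq_zero hf.hasFDerivAt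

lemma hasGradientAt_half_inner_apply_self {T : E →L[ℝ] E} (hT : T.IsSymmetric) (x : E) :
    HasGradientAt (fun y => (1 / 2) * ⟪y, T y⟫) (T x) x := by
  rw [hasGradientAt_iff_hasFDerivAt]
  refine (((hT.hasStrictFDerivAt_reApplyInnerSelf x).hasFDerivAt.const_mul (1 / 2)).congr_fderiv
    ?_).congr_of_eventuallyEq (.of_forall fun y => ?_)
  · ext v
    simp
  · simp [ContinuousLinearMap.reApplyInnerSelf_apply, real_inner_comm]

end Gradient

section Bregman

/-- The Bregman divergence `V_a(b)` of `w`. For a convex function it measures the gap in the first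
order convexity inequality, so it is also used to express smoothness of the objective. -/
noncomputable def bregmanDiv (w : E → ℝ) (a b : E) : ℝ :=
  w b - ⟪∇ w a, b - a⟫ - w a

lemma bregmanDiv_add_bregmanDiv (w : E → ℝ) (a b c : E) :
    bregmanDiv w a b + bregmanDiv w b c = bregmanDiv w a c - ⟪∇ w b - ∇ w a, c - b⟫ := by
  simp only [bregmanDiv, inner_sub_left, inner_sub_right]
  ring

variable {w : E → ℝ} {a : E}

lemma bregmanDiv_nonneg (hw : DifferentiableAt ℝ w a) (hconv : ConvexOn ℝ univ w) (b : E) :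
    0 ≤ bregmanDiv w a b := by
  have h := add_inner_le_of_convexOn_s16 hconv (mem_univ a) (mem_univ b) hw.hasGradientAt
  rw [bregmanDiv]
  linarith

lemma half_inner_le_bregmanDiv {T : E →L[ℝ] E} (hT : T.IsSymmetric) (hw : DifferentiableAt ℝ w a)
    (hsc : ConvexOn ℝ univ fun x => w x - (1 / 2) * ⟪x, T x⟫) (b : E) :
    (1 / 2) * ⟪b - a, T (b - a)⟫ ≤ bregmanDiv w a b := by
  have hgrad : HasGradientAt (fun x => w x - (1 / 2) * ⟪x, T x⟫) (∇ w a - T a) a := by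
    rw [hasGradientAt_iff_hasFDerivAt, map_sub]
    exact hw.hasGradientAt.hasFDerivAt.sub
      (hasGradientAt_half_inner_apply_self hT a).hasFDerivAt
  have hfirst := add_inner_le_of_convexOn_s16 hsc (mem_univ a) (mem_univ b) hgrad
  have hcomm : ⟪b, T a⟫ = ⟪a, T b⟫ := (real_inner_comm _ _).trans (hT a b)
  have hcomm' : ⟪T a, b⟫ = ⟪a, T b⟫ := hT a b
  have hself : ⟪T a, a⟫ = ⟪a, T a⟫ := hT a a
  simp only [bregmanDiv, map_sub, inner_sub_left, inner_sub_right, hcomm, hcomm', hself]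
    at hfirst ⊢
  linarith

lemma bregmanDiv_le_of_inner_gradient_sub_le (hw : Differentiable ℝ w) {b : E} {c : ℝ}
    (hgrad : ∀ t ∈ Ico (0 : ℝ) 1, ⟪∇ w (a + t • (b - a)) - ∇ w a, b - a⟫ ≤ c * t) :
    bregmanDiv w a b ≤ c / 2 := by
  have hleft (t : ℝ) : HasDerivAt (fun s : ℝ => w (a + s • (b - a)))
      ⟪∇ w (a + t • (b - a)), b - a⟫ t := hasDerivAt_comp_add_smul (hw _).hasGradientAt
  have hright (t : ℝ) : HasDerivAt (fun s : ℝ => w a + ⟪∇ w a, b - a⟫ * s + c / 2 * s ^ 2)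
      (⟪∇ w a, b - a⟫ + c * t) t := by
    refine ((((hasDerivAt_id t).const_mul _).const_add _).add
      ((hasDerivAt_pow 2 t).const_mul _)).congr_deriv ?_
    simp only [mul_one, Nat.cast_ofNat, Nat.add_one_sub_one, pow_one]
    ring
  have hcompare := image_le_of_deriv_right_le_deriv_boundary (a := 0) (b := 1)
    (fun t _ => (hleft t).continuousAt.continuousWithinAt)
    (fun t _ => (hleft t).hasDerivWithinAt) (by simp)
    (fun t _ => (hright t).continuousAt.continuousWithinAt)
    (fun t _ => (hright t).hasDerivWithinAt)
    (fun t ht => by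
      have h := hgrad t ht
      rw [inner_sub_left] at h
      linarith)
    (right_mem_Icc.2 zero_le_one)
  simp only [one_smul, add_sub_cancel, mul_one, one_pow] at hcompare
  rw [bregmanDiv]
  linarith

lemma hasGradientAt_bregmanDiv {b : E} (hw : DifferentiableAt ℝ w b) (a : E) :
    HasGradientAt (bregmanDiv w a) (∇ w b - ∇ w a) b := by
  have hlin : HasFDerivAt (fun u => ⟪∇ w a, u - a⟫) (innerSL ℝ (∇ w a)) b :=
    (innerSL ℝ (∇ w a)).hasFDerivAt.comp b ((hasFDerivAt_id b).sub_const a)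
  rw [hasGradientAt_iff_hasFDerivAt, map_sub]
  exact (hw.hasGradientAt.hasFDerivAt.sub hlin).sub_const (w a)

end Bregman

section MirrorStep

variable {w : E → ℝ} {a : ℝ} {g x z z' : E}

lemma gradient_sub_gradient_eq_of_isMinOn (hw : DifferentiableAt ℝ w z')
    (hz' : IsMinOn (fun u => bregmanDiv w z u + a * ⟪g, u - x⟫) univ z') :
    ∇ w z' - ∇ w z = -(a • g) := by
  have hlin : HasFDerivAt (fun u => a * ⟪g, u - x⟫) (a • innerSL ℝ g) z' :=
    ((innerSL ℝ g).hasFDerivAt.comp z' ((hasFDerivAt_id z').sub_const x)).const_mul a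
  refine eq_neg_of_add_eq_zero_left <|
    eq_zero_of_isLocalMin_of_hasGradientAt (hz'.isLocalMin Filter.univ_mem) ?_
  rw [hasGradientAt_iff_hasFDerivAt, map_add, map_smulₛₗ]
  exact (hasGradientAt_bregmanDiv hw z).hasFDerivAt.add hlin

lemma mul_inner_le_bregmanDiv_sub_bregmanDiv {Q : E ≃L[ℝ] E}
    (hQ : (Q : E →L[ℝ] E).IsPositive) (hw : Differentiable ℝ w)
    (hsc : ConvexOn ℝ univ fun x => w x - (1 / 2) * ⟪x, Q x⟫)
    (hz' : IsMinOn (fun u => bregmanDiv w z u + a * ⟪g, u - x⟫) univ z') (s : E) :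
    a * ⟪g, z - s⟫ ≤ bregmanDiv w z s - bregmanDiv w z' s + a ^ 2 / 2 * ⟪g, Q.symm g⟫ := by
  have hthree := bregmanDiv_add_bregmanDiv w z z' s
  rw [gradient_sub_gradient_eq_of_isMinOn (hw z') hz', inner_neg_left, real_inner_smul_left]
    at hthree
  have hstrong : 1 / 2 * ⟪z' - z, Q (z' - z)⟫ ≤ bregmanDiv w z z' :=
    half_inner_le_bregmanDiv hQ.isSymmetric (hw z) hsc z'
  have hyoung := inner_le_half_add_half hQ (a • g) (z - z')
  rw [← neg_sub z' z, map_neg, inner_neg_neg, neg_sub, map_smul, real_inner_smul_left,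
    real_inner_smul_left, real_inner_smul_right] at hyoung
  have hsplit : ⟪g, z - s⟫ = ⟪g, z - z'⟫ - ⟪g, s - z'⟫ := by
    rw [← inner_sub_right, sub_sub_sub_cancel_right]
  rw [hsplit]
  linarith

end MirrorStep

section GradientStep

/-- `f` is `L`-smooth for the norm `‖x‖² = ⟪x, Q x⟫`: its gradient is `L`-Lipschitz from this norm
to the dual norm `‖u‖*² = ⟪u, Q⁻¹ u⟫`. -/
def IsSmoothWrt (Q : E ≃L[ℝ] E) (L : ℝ) (f : E → ℝ) : Prop :=
  ∀ x y, √⟪∇ f x - ∇ f y, Q.symm (∇ f x - ∇ f y)⟫ ≤ L * √⟪x - y, Q (x - y)⟫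

/-- The gradient step of length `1 / L` from `x`, preconditioned by `Q`. -/
noncomputable def gradStep (Q : E ≃L[ℝ] E) (L : ℝ) (f : E → ℝ) (x : E) : E :=
  x - (1 / L) • Q.symm (∇ f x)

/-- The upper bound `f x - ‖∇ f x‖*² / (2 L)` that `L`-smoothness guarantees for the value of `f`
after a gradient step from `x`. -/
noncomputable def gradStepBound (Q : E ≃L[ℝ] E) (L : ℝ) (f : E → ℝ) (x : E) : ℝ :=
  f x - 1 / (2 * L) * ⟪∇ f x, Q.symm (∇ f x)⟫

variable {Q : E ≃L[ℝ] E} {L : ℝ} {f : E → ℝ}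

lemma bregmanDiv_le_half_mul_inner (hQ : (Q : E →L[ℝ] E).IsPositive) (hf : Differentiable ℝ f)
    (hsmooth : IsSmoothWrt Q L f) (a b : E) :
    bregmanDiv f a b ≤ L / 2 * ⟪b - a, Q (b - a)⟫ := by
  set d := b - a
  have hd : 0 ≤ ⟪d, Q d⟫ := hQ.inner_nonneg_right d
  suffices bregmanDiv f a b ≤ L * ⟪d, Q d⟫ / 2 by linarith
  refine bregmanDiv_le_of_inner_gradient_sub_le hf fun t ⟨ht, _⟩ => ?_
  have hlip : √⟪∇ f (a + t • d) - ∇ f a, Q.symm (∇ f (a + t • d) - ∇ f a)⟫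
      ≤ L * (t * √⟪d, Q d⟫) := by
    refine (hsmooth (a + t • d) a).trans_eq ?_
    rw [add_sub_cancel_left, map_smul, real_inner_smul_left, real_inner_smul_right, ← mul_assoc,
      Real.sqrt_mul (mul_self_nonneg t), Real.sqrt_mul_self ht]
  calc ⟪∇ f (a + t • d) - ∇ f a, d⟫
      ≤ √⟪∇ f (a + t • d) - ∇ f a, Q.symm (∇ f (a + t • d) - ∇ f a)⟫ * √⟪d, Q d⟫ :=
        inner_le_sqrt_mul_sqrt hQ _ d
    _ ≤ L * (t * √⟪d, Q d⟫) * √⟪d, Q d⟫ := by gcongr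
    _ = L * ⟪d, Q d⟫ * t := by linear_combination L * t * Real.mul_self_sqrt hd

lemma bregmanDiv_sub_smul_symm_le (hQ : (Q : E →L[ℝ] E).IsPositive) (hf : Differentiable ℝ f)
    (hL : 0 < L) (hsmooth : IsSmoothWrt Q L f) (x u : E) :
    bregmanDiv f x (x - (1 / L) • Q.symm u) ≤ 1 / (2 * L) * ⟪u, Q.symm u⟫ := by
  refine (bregmanDiv_le_half_mul_inner hQ hf hsmooth _ _).trans_eq ?_
  rw [sub_sub_cancel_left, map_neg, inner_neg_neg, map_smul, Q.apply_symm_apply,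
    real_inner_smul_left, real_inner_smul_right, inner_symm_apply_eq hQ.isSymmetric]
  field_simp

lemma apply_gradStep_le_gradStepBound (hQ : (Q : E →L[ℝ] E).IsPositive)
    (hf : Differentiable ℝ f) (hL : 0 < L) (hsmooth : IsSmoothWrt Q L f) (x : E) :
    f (gradStep Q L f x) ≤ gradStepBound Q L f x := by
  have h := bregmanDiv_sub_smul_symm_le hQ hf hL hsmooth x (∇ f x)
  rw [bregmanDiv, sub_sub_cancel_left, inner_neg_right, real_inner_smul_right,
    div_mul_eq_div_div_swap] at h
  rw [gradStep, gradStepBound, div_mul_eq_div_div_swap]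
  linarith

lemma inner_gradient_sub_le_bregmanDiv (hQ : (Q : E →L[ℝ] E).IsPositive)
    (hf : Differentiable ℝ f) (hconv : ConvexOn ℝ univ f) (hL : 0 < L)
    (hsmooth : IsSmoothWrt Q L f) (x y : E) :
    1 / (2 * L) * ⟪∇ f y - ∇ f x, Q.symm (∇ f y - ∇ f x)⟫ ≤ bregmanDiv f x y := by
  set u := ∇ f y - ∇ f x with hu
  -- `p` minimizes the quadratic upper bound on `bregmanDiv f x` given by smoothness at `y`.
  set p := y - (1 / L) • Q.symm u with hp
  have hnonneg : 0 ≤ bregmanDiv f x p := bregmanDiv_nonneg (hf x) hconv p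
  have hupper : bregmanDiv f y p ≤ 1 / (2 * L) * ⟪u, Q.symm u⟫ :=
    bregmanDiv_sub_smul_symm_le hQ hf hL hsmooth y u
  have hthree := bregmanDiv_add_bregmanDiv f x y p
  rw [← hu, hp, sub_sub_cancel_left, inner_neg_right, real_inner_smul_right, ← hp] at hthree
  rw [div_mul_eq_div_div_swap] at hupper ⊢
  linarith

lemma gradStepBound_add_inner_le_gradStepBound (hQ : (Q : E →L[ℝ] E).IsPositive)
    (hf : Differentiable ℝ f) (hconv : ConvexOn ℝ univ f) (hL : 0 < L)
    (hsmooth : IsSmoothWrt Q L f) (x p : E) :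
    gradStepBound Q L f x + 1 / L * ⟪∇ f x, Q.symm (∇ f x)⟫ + ⟪∇ f x, gradStep Q L f p - x⟫
      ≤ gradStepBound Q L f p := by
  have hcoco := inner_gradient_sub_le_bregmanDiv hQ hf hconv hL hsmooth x p
  rw [inner_sub_symm_apply_sub hQ.isSymmetric, bregmanDiv, div_mul_eq_div_div_swap] at hcoco
  rw [gradStep, sub_right_comm, inner_sub_right, real_inner_smul_right, gradStepBound,
    gradStepBound, div_mul_eq_div_div_swap]
  linarith

lemma gradStepBound_add_inner_le_of_isMinOn (hQ : (Q : E →L[ℝ] E).IsPositive)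
    (hf : Differentiable ℝ f) (hconv : ConvexOn ℝ univ f) (hL : 0 < L)
    (hsmooth : IsSmoothWrt Q L f) {s : E} (hs : IsMinOn f univ s) (x : E) :
    gradStepBound Q L f x + 1 / L * ⟪∇ f x, Q.symm (∇ f x)⟫ + ⟪∇ f x, s - x⟫ ≤ f s := by
  have hgrad : ∇ f s = 0 :=
    eq_zero_of_isLocalMin_of_hasGradientAt (hs.isLocalMin Filter.univ_mem) (hf s).hasGradientAt
  simpa [gradStep, gradStepBound, hgrad] using
    gradStepBound_add_inner_le_gradStepBound hQ hf hconv hL hsmooth x s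

end GradientStep

section LinearCoupling

/-- The step sizes of OGM: equality in `le_prev` is the fastest admissible growth, `αₖ ~ k / L`. -/
structure IsOGMStepSize (L : ℝ) (α : ℕ → ℝ) : Prop where
  one : α 1 = 2 / L
  pos : ∀ k, 1 ≤ k → 0 < α k
  nonneg : ∀ k, 1 ≤ k → 0 ≤ α (k + 1) ^ 2 * L - 2 * α (k + 1)
  le_prev : ∀ k, 1 ≤ k → α (k + 1) ^ 2 * L - 2 * α (k + 1) ≤ α k ^ 2 * L

/-- The iterates of the linear coupling method with distance generating function `w`. The coupling
weight of `x (k + 1)` is `τₖ₊₁ = 2 / (αₖ₊₂ L)`, and `y` starts at index `1`. -/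
structure IsLinearCoupling (Q : E ≃L[ℝ] E) (L : ℝ) (f w : E → ℝ) (α : ℕ → ℝ)
    (x y z : ℕ → E) : Prop where
  init : x 0 = z 0
  gradient_step : ∀ k, y (k + 1) = gradStep Q L f (x k)
  mirror_step : ∀ k, IsMinOn
    (fun u => bregmanDiv w (z k) u + α (k + 1) * ⟪∇ f (x k), u - x k⟫) univ (z (k + 1))
  coupling : ∀ k, x (k + 1) =
    (1 - 2 / (α (k + 2) * L)) • y (k + 1) + (2 / (α (k + 2) * L)) • z (k + 1)

variable {Q : E ≃L[ℝ] E} {L : ℝ} {f w : E → ℝ}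

lemma potential_step_le (hQ : (Q : E →L[ℝ] E).IsPositive)
    (hf : Differentiable ℝ f) (hconv : ConvexOn ℝ univ f) (hL : 0 < L)
    (hsmooth : IsSmoothWrt Q L f) {s : E} (hs : IsMinOn f univ s) (hw : Differentiable ℝ w)
    (hsc : ConvexOn ℝ univ fun x => w x - (1 / 2) * ⟪x, Q x⟫)
    {a : ℝ} (ha : 0 < a) (hge : 0 ≤ a ^ 2 * L - 2 * a) {p x z z' : E}
    (hx : x = (1 - 2 / (a * L)) • gradStep Q L f p + (2 / (a * L)) • z)
    (hz' : IsMinOn (fun u => bregmanDiv w z u + a * ⟪∇ f x, u - x⟫) univ z') :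
    a ^ 2 * L / 2 * (gradStepBound Q L f x - f s) + bregmanDiv w z' s
      ≤ (a ^ 2 * L - 2 * a) / 2 * (gradStepBound Q L f p - f s) + bregmanDiv w z s := by
  have hmirror := mul_inner_le_bregmanDiv_sub_bregmanDiv hQ hw hsc hz' s
  have hprev := mul_le_mul_of_nonneg_left
    (gradStepBound_add_inner_le_gradStepBound hQ hf hconv hL hsmooth x p)
    (div_nonneg hge zero_le_two)
  have hmin := mul_le_mul_of_nonneg_left
    (gradStepBound_add_inner_le_of_isMinOn hQ hf hconv hL hsmooth hs x) ha.le
  have hweight : a * L / 2 * (2 / (a * L)) = 1 := by field_simp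
  have hcoupling : ⟪∇ f x, z - s⟫
      = -((a * L / 2 - 1) * ⟪∇ f x, gradStep Q L f p - x⟫) - ⟪∇ f x, s - x⟫ := by
    rw [← real_inner_smul_right, ← sub_eq_smul_sub_of_eq_add hweight hx,
      ← inner_neg_right, ← inner_sub_right]
    congr 1
    abel
  have hdual : a ^ 2 * L / 2 * (1 / L * ⟪∇ f x, Q.symm (∇ f x)⟫)
      = a ^ 2 / 2 * ⟪∇ f x, Q.symm (∇ f x)⟫ := by field_simp
  rw [hcoupling] at hmirror
  linarith

variable {α : ℕ → ℝ} {x y z : ℕ → E}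

lemma potential_le_bregmanDiv (hQ : (Q : E →L[ℝ] E).IsPositive)
    (hf : Differentiable ℝ f) (hconv : ConvexOn ℝ univ f) (hL : 0 < L)
    (hsmooth : IsSmoothWrt Q L f) {s : E} (hs : IsMinOn f univ s) (hw : Differentiable ℝ w)
    (hsc : ConvexOn ℝ univ fun x => w x - (1 / 2) * ⟪x, Q x⟫)
    (hα : IsOGMStepSize L α) (hxyz : IsLinearCoupling Q L f w α x y z) (k : ℕ) :
    α (k + 1) ^ 2 * L / 2 * (gradStepBound Q L f (x k) - f s) + bregmanDiv w (z (k + 1)) s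
      ≤ bregmanDiv w (x 0) s := by
  induction k with
  | zero =>
    -- With `α₁ = 2 / L` the coupling weight is `1`, so `x 0 = z 0` is coupled to any point.
    have hτ : 2 / (α 1 * L) = 1 := by rw [hα.one]; field_simp
    have hzero : α 1 ^ 2 * L - 2 * α 1 = 0 := by rw [hα.one]; field_simp; ring
    have hcoupling : x 0
        = (1 - 2 / (α 1 * L)) • gradStep Q L f (x 0) + (2 / (α 1 * L)) • z 0 := by
      rw [hτ, sub_self, zero_smul, one_smul, zero_add, hxyz.init]
    have hstep := potential_step_le hQ hf hconv hL hsmooth hs hw hsc (hα.pos 1 le_rfl)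
      hzero.ge hcoupling (hxyz.mirror_step 0)
    simpa only [zero_add, hzero, zero_div, zero_mul, ← hxyz.init] using hstep
  | succ k ih =>
    have hbound : 0 ≤ gradStepBound Q L f (x k) - f s := sub_nonneg.2 <|
      (isMinOn_univ_iff.1 hs _).trans (apply_gradStep_le_gradStepBound hQ hf hL hsmooth (x k))
    have hcoupling := hxyz.coupling k
    rw [hxyz.gradient_step] at hcoupling
    have hstep := potential_step_le hQ hf hconv hL hsmooth hs hw hsc (hα.pos (k + 2) (by lia))
      (hα.nonneg (k + 1) (by lia)) hcoupling (hxyz.mirror_step (k + 1))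
    have hα_le := mul_le_mul_of_nonneg_right (hα.le_prev (k + 1) (by lia)) hbound
    linarith

theorem lc_ogm_rate_general (hQ : (Q : E →L[ℝ] E).IsPositive)
    (hf : Differentiable ℝ f) (hconv : ConvexOn ℝ univ f) (hL : 0 < L)
    (hsmooth : IsSmoothWrt Q L f) {s : E} (hs : IsMinOn f univ s) (hw : Differentiable ℝ w)
    (hsc : ConvexOn ℝ univ fun x => w x - (1 / 2) * ⟪x, Q x⟫)
    (hα : IsOGMStepSize L α) (hxyz : IsLinearCoupling Q L f w α x y z) (k : ℕ) (hk : 1 ≤ k) :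
    f (y k) - f s ≤ 2 * bregmanDiv w (x 0) s / (L * α k ^ 2) := by
  obtain ⟨j, rfl⟩ := Nat.exists_eq_add_of_le' hk
  have hpotential := potential_le_bregmanDiv hQ hf hconv hL hsmooth hs hw hsc hα hxyz j
  have hdiv : 0 ≤ bregmanDiv w (z (j + 1)) s :=
    (mul_nonneg one_half_pos.le (hQ.inner_nonneg_right _)).trans
      (half_inner_le_bregmanDiv hQ.isSymmetric (hw _) hsc s)
  have hpos : 0 < L * α (j + 1) ^ 2 := mul_pos hL (pow_pos (hα.pos _ hk) 2)
  calc f (y (j + 1)) - f s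
      ≤ gradStepBound Q L f (x j) - f s := by
        rw [hxyz.gradient_step]
        gcongr
        exact apply_gradStep_le_gradStepBound hQ hf hL hsmooth (x j)
    _ ≤ 2 * bregmanDiv w (x 0) s / (L * α (j + 1) ^ 2) := by
        rw [le_div_iff₀ hpos]
        linarith

end LinearCoupling

/-- Convergence rate of OGM derived via linear coupling with a quadratic norm
`‖x‖² = ⟨x, Qx⟩` and a Bregman divergence `V` generated by a 1-strongly convex
distance generating function `w`:
`f(yₖ) − f⋆ ≤ 2V_{x₀}(x⋆)/(Lαₖ²)` for `k ≥ 1`. -/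
theorem lc_ogm_rate (n : ℕ)
    (Q Qinv : EuclideanSpace ℝ (Fin n) →L[ℝ] EuclideanSpace ℝ (Fin n))
    (hsymm : ∀ x y, ⟪Q x, y⟫ = ⟪x, Q y⟫)
    (hpd : ∀ x, x ≠ 0 → 0 < ⟪x, Q x⟫)
    (hinv₁ : ∀ x, Q (Qinv x) = x) (hinv₂ : ∀ x, Qinv (Q x) = x)
    (f : EuclideanSpace ℝ (Fin n) → ℝ)
    (f' : EuclideanSpace ℝ (Fin n) → EuclideanSpace ℝ (Fin n))
    (L : ℝ) (hL : 0 < L)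
    (hdiff : ∀ x, HasGradientAt f (f' x) x)
    (hconv : ConvexOn ℝ Set.univ f)
    (hsmooth : ∀ x y, Real.sqrt ⟪f' x - f' y, Qinv (f' x - f' y)⟫
      ≤ L * Real.sqrt ⟪x - y, Q (x - y)⟫)
    (xstar : EuclideanSpace ℝ (Fin n)) (hmin : ∀ y, f xstar ≤ f y)
    (w : EuclideanSpace ℝ (Fin n) → ℝ)
    (w' : EuclideanSpace ℝ (Fin n) → EuclideanSpace ℝ (Fin n))
    (hwdiff : ∀ x, HasGradientAt w (w' x) x)
    (hwsc : ConvexOn ℝ Set.univ (fun x => w x - (1 / 2) * ⟪x, Q x⟫))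
    (V : EuclideanSpace ℝ (Fin n) → EuclideanSpace ℝ (Fin n) → ℝ)
    (hV : ∀ a b, V a b = w b - ⟪w' a, b - a⟫ - w a)
    (α τ : ℕ → ℝ)
    (hα1 : α 1 = 2 / L) (hαpos : ∀ k, 1 ≤ k → 0 < α k)
    (hαrec : ∀ k, 1 ≤ k → 0 ≤ α (k + 1) ^ 2 * L - 2 * α (k + 1) ∧
      α (k + 1) ^ 2 * L - 2 * α (k + 1) ≤ α k ^ 2 * L)
    (hτ : ∀ k, 1 ≤ k → τ k = 2 / (α (k + 1) * L) ∧ 0 < τ k ∧ τ k ≤ 1)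
    (x y z : ℕ → EuclideanSpace ℝ (Fin n))
    (hx0 : x 0 = z 0)
    (hy : ∀ k, y (k + 1) = x k - (1 / L) • Qinv (f' (x k)))
    (hz : ∀ k, IsMinOn (fun u => V (z k) u + α (k + 1) * ⟪f' (x k), u - x k⟫)
      Set.univ (z (k + 1)))
    (hx : ∀ k, x (k + 1) = (1 - τ (k + 1)) • y (k + 1) + τ (k + 1) • z (k + 1)) :
    ∀ k, 1 ≤ k → f (y k) - f xstar ≤ 2 * V (x 0) xstar / (L * α k ^ 2) := by
  obtain rfl : ∇ f = f' := gradient_eq hdiff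
  obtain rfl : ∇ w = w' := gradient_eq hwdiff
  obtain rfl : V = bregmanDiv w := funext₂ hV
  have hpos : Q.IsPositive := Q.isPositive_iff.2 ⟨hsymm, fun v => by
    obtain rfl | hv := eq_or_ne v 0
    · simp
    · exact (hsymm v v).symm ▸ (hpd v hv).le⟩
  exact lc_ogm_rate_general (Q := .equivOfInverse Q Qinv hinv₂ hinv₁) hpos
    (fun a => (hdiff a).differentiableAt) hconv hL hsmooth (isMinOn_univ_iff.2 hmin)
    (fun a => (hwdiff a).differentiableAt) hwsc
    ⟨hα1, hαpos, fun k hk => (hαrec k hk).1, fun k hk => (hαrec k hk).2⟩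
    ⟨hx0, hy, hz, fun k => by rw [← (hτ (k + 1) k.succ_pos).1, hx]⟩
end
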